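/- arXiv:2404.11823 — 3 statements merged into one kernel-verified Lean document; each statement's English description precedes it below -/
import Mathlib

section
/- Let p be an odd prime, Γ a cyclic group of order p^r with r ≥ 2, generator σ, and R = ℤ_p[Γ]. Let N_Γ = Σ_{g∈Γ} g be the norm element. Suppose J is an ideal of R with (N_Γ) ⊆ J ⊆ R such that J is isomorphic as an R-module to the ideal (N_Γ, p^r). Then the p-adic valuation of the cardinality of R/J lies in the set {r, 2r, ..., pr} ∪ {pr+1, pr+2, ...}. -/
open Polynomial

theorem idx_mul {S : Type*} [CommRing S] (P Q h : S) (H : ∀ w, h ∣ Q * w → h ∣ w) :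
    Nat.card (S ⧸ Ideal.span {P * Q, h}) =
      Nat.card (S ⧸ Ideal.span {P, h}) * Nat.card (S ⧸ Ideal.span {Q, h}) := by
  let A : AddSubgroup S := Submodule.toAddSubgroup (Ideal.span {P * Q, h})
  let B : AddSubgroup S := Submodule.toAddSubgroup (Ideal.span {P, h})
  let D : AddSubgroup S := Submodule.toAddSubgroup (Ideal.span {Q, h})
  change A.index = B.index * D.index
  have hAD : A ≤ D := by
    intro x hx
    change x ∈ Ideal.span {P * Q, h} at hx
    change x ∈ Ideal.span {Q, h}
    rw [Ideal.mem_span_pair] at hx ⊢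
    obtain ⟨a, b, rfl⟩ := hx
    exact ⟨a * P, b, by ring⟩
  rw [← AddSubgroup.relIndex_mul_index hAD]
  congr 1
  have hB : B = A.comap (AddMonoidHom.mulLeft Q) := by
    ext z
    change z ∈ Ideal.span {P, h} ↔ Q * z ∈ Ideal.span {P * Q, h}
    rw [Ideal.mem_span_pair, Ideal.mem_span_pair]
    constructor
    · rintro ⟨a, b, rfl⟩
      exact ⟨a, Q * b, by ring⟩
    · rintro ⟨a, b, hab⟩
      obtain ⟨c, hc⟩ := H (z - a * P) ⟨b, by linear_combination -hab⟩
      exact ⟨a, c, by linear_combination -hc⟩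
  have hD : D = (⊤ : AddSubgroup S).map (AddMonoidHom.mulLeft Q) ⊔ A := by
    ext z
    rw [AddSubgroup.mem_sup]
    change z ∈ Ideal.span {Q, h} ↔ _
    rw [Ideal.mem_span_pair]
    constructor
    · rintro ⟨a, b, rfl⟩
      refine ⟨a * Q, ⟨a, trivial, mul_comm _ _⟩, b * h, ?_, rfl⟩
      exact Ideal.mul_mem_left _ _ (Ideal.subset_span (by simp))
    · rintro ⟨_, ⟨a, -, rfl⟩, y, hy, rfl⟩
      change y ∈ Ideal.span {P * Q, h} at hy
      rw [Ideal.mem_span_pair] at hy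
      obtain ⟨c, e, rfl⟩ := hy
      refine ⟨a + c * P, e, ?_⟩
      simp only [AddMonoidHom.coe_mulLeft]
      ring
  rw [hD, AddSubgroup.relIndex_sup_right, ← AddSubgroup.relIndex_comap, ← hB,
    AddSubgroup.relIndex_top_right]

theorem idx_one {S : Type*} [CommRing S] (I : Ideal S) (h : (1 : S) ∈ I) :
    Nat.card (S ⧸ I) = 1 := by
  rw [(Ideal.eq_top_iff_one I).2 h]
  exact Nat.card_unique

theorem idx_prod {S : Type*} [CommRing S] [IsDomain S] (E : ℕ → S) (h : S) (r : ℕ)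
    (hE : ∀ i < r, Prime (E i)) (hh : ∀ i < r, ¬ E i ∣ h) :
    Nat.card (S ⧸ Ideal.span {∏ i ∈ Finset.range r, E i, h}) =
      ∏ i ∈ Finset.range r, Nat.card (S ⧸ Ideal.span {E i, h}) := by
  induction r with
  | zero => simpa using idx_one _ (Ideal.subset_span (by simp))
  | succ n ih =>
    rw [Finset.prod_range_succ, Finset.prod_range_succ, idx_mul,
      ih (fun i hi => hE i (by omega)) (fun i hi => hh i (by omega))]
    rintro w ⟨v, hv⟩
    have hp := hE n (by omega)
    rcases hp.dvd_or_dvd (Dvd.intro _ hv) with h1 | ⟨c, rfl⟩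
    · exact absurd h1 (hh n (by omega))
    · exact ⟨c, mul_left_cancel₀ hp.ne_zero (by linear_combination hv)⟩

section
variable {p : ℕ} [Fact p.Prime]

theorem card_pX : Nat.card (ℤ_[p][X] ⧸ Ideal.span {C (p : ℤ_[p]), (X : ℤ_[p][X])}) = p := by
  let φ : ℤ_[p][X] →+* ZMod p := PadicInt.toZMod.comp constantCoeff
  have hφ : Function.Surjective φ :=
    (ZMod.ringHom_surjective PadicInt.toZMod).comp constantCoeff_surjective
  have hk : Ideal.span {C (p : ℤ_[p]), (X : ℤ_[p][X])} = RingHom.ker φ := by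
    ext q
    have : q ∈ RingHom.ker φ ↔ q.coeff 0 ∈ RingHom.ker (PadicInt.toZMod : ℤ_[p] →+* ZMod p) := by
      simp [φ, RingHom.mem_ker]
    rw [this, PadicInt.ker_toZMod, PadicInt.maximalIdeal_eq_span_p, Ideal.mem_span_singleton,
      Ideal.mem_span_pair]
    constructor
    · rintro ⟨a, b, rfl⟩
      simp
    · rintro ⟨c, hc⟩
      refine ⟨C c, q.divX, ?_⟩
      conv_rhs => rw [← divX_mul_X_add q, hc]
      simp only [C_mul]; ring
  rw [hk, Nat.card_congr (RingHom.quotientKerEquivOfSurjective hφ).toEquiv, Nat.card_zmod]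

variable {E c : ℤ_[p][X]} {d : ℕ}

theorem unit_mod (hm : E.Monic) (hE : E = X ^ d + C (p : ℤ_[p]) * c)
    (w : ℤ_[p][X]) (hw : IsUnit (w.coeff 0)) : Ideal.span {E, w} = ⊤ := by
  by_contra hne
  obtain ⟨M, hM, hle⟩ := Ideal.exists_le_maximal _ hne
  have hEM : E ∈ M := hle (Ideal.subset_span (by simp))
  have hwM : w ∈ M := hle (Ideal.subset_span (by simp))
  have : Module.Finite ℤ_[p] (AdjoinRoot E) := hm.finite_adjoinRoot
  have hpM : C (p : ℤ_[p]) ∈ M := by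
    have hker : RingHom.ker (AdjoinRoot.mk E) ≤ M := by
      intro x hx
      rw [RingHom.mem_ker, AdjoinRoot.mk_eq_zero] at hx
      exact M.mem_of_dvd hx hEM
    have hM' : (M.map (AdjoinRoot.mk E)).IsMaximal :=
      Ideal.IsMaximal.map_of_surjective_of_ker_le AdjoinRoot.mk_surjective hker
    have h2 := Ideal.isMaximal_comap_of_isIntegral_of_isMaximal (R := ℤ_[p])
      (M.map (AdjoinRoot.mk E))
    have h3 := IsLocalRing.eq_maximalIdeal h2
    have h4 : (p : ℤ_[p]) ∈ IsLocalRing.maximalIdeal ℤ_[p] := by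
      rw [PadicInt.maximalIdeal_eq_span_p]; exact Ideal.mem_span_singleton_self _
    rw [← h3, Ideal.mem_comap] at h4
    have h5 : AdjoinRoot.mk E (C (p : ℤ_[p])) ∈ M.map (AdjoinRoot.mk E) := h4
    rw [← Ideal.mem_comap, Ideal.comap_map_of_surjective' _ AdjoinRoot.mk_surjective] at h5
    rwa [sup_eq_left.2 hker] at h5
  have hX : (X : ℤ_[p][X]) ∈ M := by
    apply hM.isPrime.mem_of_pow_mem d
    have : (X : ℤ_[p][X]) ^ d = E - C (p : ℤ_[p]) * c := by rw [hE]; ring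
    rw [this]
    exact M.sub_mem hEM (M.mul_mem_right _ hpM)
  have hc : C (w.coeff 0) ∈ M := by
    have : C (w.coeff 0) = w - w.divX * X := by
      linear_combination divX_mul_X_add w
    rw [this]
    exact M.sub_mem hwM (M.mul_mem_left _ hX)
  exact hM.ne_top (Ideal.eq_top_of_isUnit_mem _ hc (hw.map C))

theorem idx_mulE (hP : Prime E) (a b : ℤ_[p][X]) (hb : ¬ E ∣ b) :
    Nat.card (ℤ_[p][X] ⧸ Ideal.span {E, a * b}) =
      Nat.card (ℤ_[p][X] ⧸ Ideal.span {E, a}) * Nat.card (ℤ_[p][X] ⧸ Ideal.span {E, b}) := by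
  rw [Ideal.span_pair_comm, idx_mul, Ideal.span_pair_comm, Ideal.span_pair_comm (x := b)]
  intro w hw
  exact (hP.dvd_or_dvd hw).resolve_left hb

theorem span_E_X (hd : d ≠ 0) (hE : E = X ^ d + C (p : ℤ_[p]) * c) (hc : c.coeff 0 = 1) :
    Ideal.span {E, (X : ℤ_[p][X])} = Ideal.span {C (p : ℤ_[p]), (X : ℤ_[p][X])} := by
  obtain ⟨d, rfl⟩ := Nat.exists_eq_succ_of_ne_zero hd
  have h : c = c.divX * X + 1 := by
    conv_lhs => rw [← divX_mul_X_add c, hc]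
    simp
  have : E = C (p : ℤ_[p]) + (X ^ d + C (p : ℤ_[p]) * c.divX) * X := by
    rw [hE]
    nth_rw 1 [h]
    rw [Nat.succ_eq_add_one]
    ring
  rw [this]
  rw [Ideal.span_pair_add_mul_right]

theorem not_dvd_X (hP : Prime E) (hd : d ≠ 0) (hE : E = X ^ d + C (p : ℤ_[p]) * c)
    (hc : c.coeff 0 = 1) : ¬ E ∣ (X : ℤ_[p][X]) := by
  intro h
  have h2 : (X : ℤ_[p][X]) ∣ E := (hP.irreducible.dvd_symm irreducible_X h)
  rw [X_dvd_iff, hE] at h2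
  have : (p : ℤ_[p]) = 0 := by simpa [hc, hd, coeff_X_pow, Ne.symm hd] using h2
  exact (Fact.out : p.Prime).ne_zero (by exact_mod_cast this)

theorem card_X_pow (hP : Prime E) (hd : d ≠ 0) (hE : E = X ^ d + C (p : ℤ_[p]) * c)
    (hc : c.coeff 0 = 1) (m : ℕ) :
    Nat.card (ℤ_[p][X] ⧸ Ideal.span {E, (X : ℤ_[p][X]) ^ m}) = p ^ m := by
  induction m with
  | zero => simpa using idx_one _ (Ideal.subset_span (by simp))
  | succ n ih =>
    rw [pow_succ, idx_mulE hP _ _ (not_dvd_X hP hd hE hc), ih, span_E_X hd hE hc, card_pX, pow_succ]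

theorem card_ne_zero (hm : E.Monic) (hP : Prime E) (hd : d ≠ 0)
    (hE : E = X ^ d + C (p : ℤ_[p]) * c)
    (hc : c.coeff 0 = 1) (k : ℤ_[p][X]) (hk : ¬ E ∣ k) :
    Nat.card (ℤ_[p][X] ⧸ Ideal.span {E, k}) ≠ 0 := by
  have : Module.Finite ℤ_[p] (AdjoinRoot E) := hm.finite_adjoinRoot
  have : IsDomain (AdjoinRoot E) := AdjoinRoot.isDomain_of_prime hP
  have hk0 : AdjoinRoot.mk E k ≠ 0 := by rwa [Ne, AdjoinRoot.mk_eq_zero]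
  have hb := Ideal.comap_ne_bot_of_integral_mem (R := ℤ_[p]) hk0
    (Ideal.mem_span_singleton_self (AdjoinRoot.mk E k)) (Algebra.IsIntegral.isIntegral _)
  obtain ⟨a, ha, ha0⟩ := Submodule.exists_mem_ne_zero_of_ne_bot hb
  rw [Ideal.mem_comap, Ideal.mem_span_singleton] at ha
  obtain ⟨y, hy⟩ := ha
  obtain ⟨y, rfl⟩ := AdjoinRoot.mk_surjective y
  have hy' : AdjoinRoot.mk E (C a) = AdjoinRoot.mk E (k * y) := by rw [map_mul]; exact hy
  rw [AdjoinRoot.mk_eq_mk] at hy'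
  obtain ⟨z, hz⟩ := hy'
  have haI : C a ∈ Ideal.span {E, k} := by
    rw [Ideal.mem_span_pair]
    exact ⟨z, y, by linear_combination -hz⟩
  have hpn : C (p : ℤ_[p]) ^ a.valuation ∈ Ideal.span {E, k} := by
    have h1 := PadicInt.unitCoeff_spec ha0
    have : C (p : ℤ_[p]) ^ a.valuation = C (↑(PadicInt.unitCoeff ha0)⁻¹ : ℤ_[p]) * C a := by
      rw [← C_pow, ← C_mul]
      congr 1
      exact (Units.eq_inv_mul_iff_mul_eq _).2 h1.symm
    rw [this]
    exact Ideal.mul_mem_left _ _ haI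
  have hX : (X : ℤ_[p][X]) ^ (d * a.valuation) ∈ Ideal.span {E, k} := by
    rw [← Ideal.Quotient.eq_zero_iff_mem] at hpn ⊢
    have hE0 : Ideal.Quotient.mk (Ideal.span {E, k}) E = 0 :=
      Ideal.Quotient.eq_zero_iff_mem.2 (Ideal.subset_span (by simp))
    have : (X : ℤ_[p][X]) ^ d = E - C (p : ℤ_[p]) * c := by rw [hE]; ring
    rw [pow_mul, this, map_pow, map_sub, hE0, zero_sub, ← map_neg, neg_mul_eq_mul_neg, map_mul,
      mul_pow, ← map_pow, hpn, zero_mul]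
  have hle : Ideal.span {E, (X : ℤ_[p][X]) ^ (d * a.valuation)} ≤ Ideal.span {E, k} := by
    rw [Ideal.span_le]
    rintro x (rfl | rfl)
    · exact Ideal.subset_span (by simp)
    · exact hX
  have hcard := card_X_pow hP hd hE hc (d * a.valuation)
  have hfin : Finite (ℤ_[p][X] ⧸ Ideal.span {E, (X : ℤ_[p][X]) ^ (d * a.valuation)}) := by
    apply Nat.finite_of_card_ne_zero
    rw [hcard]
    exact pow_ne_zero _ (Fact.out : p.Prime).ne_zero
  have := Finite.of_surjective _ (Ideal.Quotient.factor_surjective hle)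
  exact Nat.card_pos.ne'

/-- p is a multiple of X^d mod E -/
theorem p_eq (hm : E.Monic) (hE : E = X ^ d + C (p : ℤ_[p]) * c) (hc : c.coeff 0 = 1) :
    ∃ a b, C (p : ℤ_[p]) = X ^ d * a + E * b := by
  have h := unit_mod hm hE c (by rw [hc]; exact isUnit_one)
  rw [Ideal.eq_top_iff_one, Ideal.mem_span_pair] at h
  obtain ⟨u, v, huv⟩ := h
  refine ⟨-v, C (p : ℤ_[p]) * u + v, ?_⟩
  linear_combination -C (p : ℤ_[p]) * huv - v * hE

theorem span_add (f b : ℤ_[p][X]) : Ideal.span {E, f + E * b} = Ideal.span {E, f} := by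
  rw [Ideal.span_pair_comm, mul_comm, Ideal.span_pair_add_mul_right, Ideal.span_pair_comm]

theorem case1 (hm : E.Monic) (hP : Prime E) (hd : d ≠ 0) (hE : E = X ^ d + C (p : ℤ_[p]) * c)
    (hc : c.coeff 0 = 1) (l : ℕ) (hl : l < d) (u g : ℤ_[p][X]) (hu : IsUnit (u.coeff 0)) :
    Nat.card (ℤ_[p][X] ⧸ Ideal.span {E, X ^ l * u + C (p : ℤ_[p]) * g}) = p ^ l := by
  obtain ⟨a, b, hab⟩ := p_eq hm hE hc
  obtain ⟨e, rfl⟩ := Nat.exists_eq_add_of_lt hl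
  have : X ^ l * u + C (p : ℤ_[p]) * g = X ^ l * (u + X ^ (e + 1) * a * g) + E * (b * g) := by
    rw [hab]; ring
  rw [this, span_add]
  have hw := unit_mod hm hE (u + X ^ (e + 1) * a * g) (by
    rw [coeff_add, mul_assoc, pow_succ', mul_assoc, coeff_X_mul_zero, add_zero]; exact hu)
  rw [idx_mulE hP, card_X_pow hP hd hE hc, hw, idx_one ⊤ trivial, mul_one]
  intro hdvd
  have : Ideal.span {E, u + X ^ (e + 1) * a * g} = Ideal.span {E} := by
    obtain ⟨q, hq⟩ := hdvd
    rw [hq]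
    have := span_add (E := E) 0 q
    rw [zero_add] at this
    rw [this]
    rw [Ideal.span_pair_comm]; exact Submodule.span_insert_zero
  rw [this, Ideal.span_singleton_eq_top] at hw
  exact hP.not_isUnit hw

theorem case2 (hm : E.Monic) (hP : Prime E) (hd : d ≠ 0) (hE : E = X ^ d + C (p : ℤ_[p]) * c)
    (hc : c.coeff 0 = 1) (l : ℕ) (hl : l ≤ d) (u g : ℤ_[p][X])
    (hf : ¬ E ∣ X ^ l * u + C (p : ℤ_[p]) * g) :
    ∃ n : ℕ, n ≠ 0 ∧
      Nat.card (ℤ_[p][X] ⧸ Ideal.span {E, X ^ l * u + C (p : ℤ_[p]) * g}) = p ^ l * n := by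
  obtain ⟨a, b, hab⟩ := p_eq hm hE hc
  obtain ⟨e, rfl⟩ := Nat.exists_eq_add_of_le hl
  have : X ^ l * u + C (p : ℤ_[p]) * g = X ^ l * (u + X ^ e * a * g) + E * (b * g) := by
    rw [hab]; ring
  rw [this] at hf ⊢
  rw [span_add]
  have hk : ¬ E ∣ (u + X ^ e * a * g) := fun h =>
    hf (dvd_add (h.mul_left _) (dvd_mul_right _ _))
  refine ⟨_, card_ne_zero hm hP hd hE hc _ hk, ?_⟩
  rw [idx_mulE hP _ _ hk, card_X_pow hP hd hE hc]

theorem dichotomy (n : ℕ) (f : ℤ_[p][X]) :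
    (∃ l < n, ∃ u g : ℤ_[p][X], IsUnit (u.coeff 0) ∧ f = X ^ l * u + C (p : ℤ_[p]) * g) ∨
    (∃ u g : ℤ_[p][X], f = X ^ n * u + C (p : ℤ_[p]) * g) := by
  induction n with
  | zero => exact Or.inr ⟨f, 0, by simp⟩
  | succ n ih =>
    rcases ih with ⟨l, hl, h⟩ | ⟨u, g, hf⟩
    · exact Or.inl ⟨l, by omega, h⟩
    · by_cases hu : IsUnit (u.coeff 0)
      · exact Or.inl ⟨n, by omega, u, g, hu, hf⟩
      · right
        have : u.coeff 0 ∈ IsLocalRing.maximalIdeal ℤ_[p] := hu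
        rw [PadicInt.maximalIdeal_eq_span_p, Ideal.mem_span_singleton] at this
        obtain ⟨a, ha⟩ := this
        refine ⟨u.divX, X ^ n * C a + g, ?_⟩
        rw [hf]
        conv_lhs => rw [← divX_mul_X_add u, ha]
        rw [C_mul]; ring
end

section
variable {p : ℕ} [Fact p.Prime]

theorem cyc_props (i : ℕ) : ∃ (c : ℤ_[p][X]) (d : ℕ), p - 1 ≤ d ∧ d ≠ 0 ∧
    ((cyclotomic (p ^ (i + 1)) ℤ_[p]).comp (X + 1)).Monic ∧
    Prime ((cyclotomic (p ^ (i + 1)) ℤ_[p]).comp (X + 1)) ∧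
    (cyclotomic (p ^ (i + 1)) ℤ_[p]).comp (X + 1) = X ^ d + C (p : ℤ_[p]) * c ∧
    c.coeff 0 = 1 := by
  have hpp : p.Prime := Fact.out
  have hp0 : (p : ℤ_[p]) ≠ 0 := by exact_mod_cast hpp.ne_zero
  set E := (cyclotomic (p ^ (i + 1)) ℤ_[p]).comp (X + 1) with hEdef
  have hmap : E = ((cyclotomic (p ^ (i + 1)) ℤ).comp (X + 1)).map (Int.castRingHom ℤ_[p]) := by
    rw [Polynomial.map_comp, map_cyclotomic]; simp [E]
  have hmZ : ((cyclotomic (p ^ (i + 1)) ℤ).comp (X + 1)).Monic := by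
    have := (cyclotomic.monic (p ^ (i + 1)) ℤ).comp_X_add_C 1
    simpa using this
  have hm : E.Monic := by rw [hmap]; exact hmZ.map _
  have hdeg : E.natDegree = p ^ i * (p - 1) := by
    have : E.natDegree = (cyclotomic (p ^ (i + 1)) ℤ_[p]).natDegree := by
      rw [hEdef, natDegree_comp]
      have : (X + 1 : ℤ_[p][X]).natDegree = 1 := by simpa using natDegree_X_add_C (1 : ℤ_[p])
      rw [this, mul_one]
    rw [this, natDegree_cyclotomic, Nat.totient_prime_pow_succ hpp]
  have hdegZ : ((cyclotomic (p ^ (i + 1)) ℤ).comp (X + 1)).natDegree = E.natDegree := by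
    rw [hmap, hmZ.natDegree_map]
  have hp1 : 0 < p - 1 := Nat.sub_pos_of_lt hpp.one_lt
  have hd : E.natDegree ≠ 0 := by
    rw [hdeg]; exact (Nat.mul_pos (pow_pos hpp.pos _) hp1).ne'
  have h0 : E.coeff 0 = p := by
    rw [coeff_zero_eq_eval_zero, hEdef, eval_comp]
    simpa using eval_one_cyclotomic_prime_pow (R := ℤ_[p]) (p := p) i
  have hcoef : ∀ n < E.natDegree, (p : ℤ_[p]) ∣ E.coeff n := by
    intro n hn
    have := (cyclotomic_prime_pow_comp_X_add_one_isEisensteinAt p i).mem (n := n)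
      (by rw [hdegZ]; exact hn)
    rw [Ideal.submodule_span_eq, Ideal.mem_span_singleton] at this
    rw [hmap, coeff_map]
    simpa using map_dvd (Int.castRingHom ℤ_[p]) this
  have hdvd : C (p : ℤ_[p]) ∣ E - X ^ E.natDegree := by
    rw [C_dvd_iff_dvd_coeff]
    intro n
    rw [coeff_sub, coeff_X_pow]
    rcases lt_trichotomy n E.natDegree with h | h | h
    · rw [if_neg h.ne, sub_zero]; exact hcoef n h
    · rw [if_pos h, h, hm.coeff_natDegree, sub_self]; exact dvd_zero _
    · rw [if_neg h.ne', coeff_eq_zero_of_natDegree_lt h, sub_zero]; exact dvd_zero _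
  obtain ⟨c, hc⟩ := hdvd
  have hE : E = X ^ E.natDegree + C (p : ℤ_[p]) * c := by linear_combination hc
  refine ⟨c, E.natDegree, ?_, hd, hm, ?_, hE, ?_⟩
  · rw [hdeg]; exact Nat.le_mul_of_pos_left _ (pow_pos hpp.pos _)
  · apply Irreducible.prime
    have hpr : Prime (p : ℤ_[p]) := PadicInt.prime_p
    apply IsEisensteinAt.irreducible (𝓟 := Ideal.span {(p : ℤ_[p])})
    · constructor
      · rw [hm.leadingCoeff, Ideal.mem_span_singleton]
        exact fun h => hpr.not_isUnit (isUnit_of_dvd_one h)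
      · intro n hn
        rw [Ideal.mem_span_singleton]; exact hcoef n hn
      · rw [h0, Ideal.span_singleton_pow, Ideal.mem_span_singleton]
        rintro ⟨k, hk⟩
        apply hpr.not_isUnit
        refine IsUnit.of_mul_eq_one k ?_
        exact mul_left_cancel₀ hp0 (by linear_combination -hk)
    · exact (Ideal.span_singleton_prime hp0).2 hpr
    · exact hm.isPrimitive
    · exact Nat.pos_of_ne_zero hd
  · have := congrArg (fun q => coeff q 0) hE
    simp only [coeff_add, coeff_X_pow, if_neg (Ne.symm hd), coeff_C_mul, h0, zero_add] at this
    exact mul_left_cancel₀ hp0 (by linear_combination -this)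

theorem prod_cyc (r : ℕ) :
    (X : ℤ_[p][X]) * ∏ i ∈ Finset.range r, (cyclotomic (p ^ (i + 1)) ℤ_[p]).comp (X + 1) =
      (X + 1) ^ p ^ r - 1 := by
  induction r with
  | zero => simp
  | succ n ih =>
    rw [Finset.prod_range_succ, ← mul_assoc, ih]
    have := congrArg (fun q => comp q (X + 1)) (cyclotomic_prime_pow_mul_X_pow_sub_one ℤ_[p] p n)
    simp only [mul_comp, sub_comp, pow_comp, X_comp, one_comp] at this
    rw [← this]; ring

theorem poly_main (r : ℕ) (f P : ℤ_[p][X])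
    (hP : P = ∏ i ∈ Finset.range r, (cyclotomic (p ^ (i + 1)) ℤ_[p]).comp (X + 1))
    (hreg : ∀ z, P ∣ X * f * z → P ∣ z) :
    (∃ k : ℕ, 1 ≤ k ∧ k ≤ p ∧
        padicValNat p (Nat.card (ℤ_[p][X] ⧸ Ideal.span {P, X * f})) = k * r) ∨
      p * r < padicValNat p (Nat.card (ℤ_[p][X] ⧸ Ideal.span {P, X * f})) := by
  have hpp : p.Prime := Fact.out
  have h2 := hpp.two_le
  set E : ℕ → ℤ_[p][X] := fun i => (cyclotomic (p ^ (i + 1)) ℤ_[p]).comp (X + 1) with hEdef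
  have hprime : ∀ i, Prime (E i) := fun i => by
    obtain ⟨c, d, -, -, -, h, -⟩ := cyc_props (p := p) i; exact h
  have hnd : ∀ i < r, ¬ E i ∣ X * f := by
    rintro i hi ⟨q, hq⟩
    have hPi : E i * ∏ j ∈ (Finset.range r).erase i, E j = P := by
      rw [hP]; exact Finset.mul_prod_erase _ _ (Finset.mem_range.2 hi)
    have hQ : (∏ j ∈ (Finset.range r).erase i, E j) ≠ 0 :=
      Finset.prod_ne_zero_iff.2 fun j _ => (hprime j).ne_zero
    obtain ⟨s, hs⟩ := hreg (∏ j ∈ (Finset.range r).erase i, E j)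
      ⟨q, by rw [hq, ← hPi]; ring⟩
    apply (hprime i).not_isUnit
    refine IsUnit.of_mul_eq_one s ?_
    apply mul_left_cancel₀ hQ
    rw [← hPi] at hs
    linear_combination -hs
  have hnd' : ∀ i < r, ¬ E i ∣ f := fun i hi h => hnd i hi (h.mul_left _)
  have hstep : ∀ i < r, Nat.card (ℤ_[p][X] ⧸ Ideal.span {E i, X * f}) =
      p * Nat.card (ℤ_[p][X] ⧸ Ideal.span {E i, f}) := by
    intro i hi
    obtain ⟨c, d, hd1, hd, hm, h, hE, hc⟩ := cyc_props (p := p) i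
    rw [idx_mulE h _ _ (hnd' i hi), span_E_X hd hE hc, card_pX]
  rw [hP, idx_prod E _ r (fun i _ => hprime i) hnd]
  rcases dichotomy (p - 1) f with ⟨l, hl, u, g, hu, hf⟩ | ⟨u, g, hf⟩
  · left
    refine ⟨l + 1, by omega, by omega, ?_⟩
    have : ∀ i ∈ Finset.range r, Nat.card (ℤ_[p][X] ⧸ Ideal.span {E i, X * f}) = p ^ (l + 1) := by
      intro i hi
      rw [hstep i (Finset.mem_range.1 hi), hf]
      obtain ⟨c, d, hd1, hd, hm, h, hE, hc⟩ := cyc_props (p := p) i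
      rw [case1 hm h hd hE hc l (by omega) u g hu]; ring
    rw [Finset.prod_congr rfl this, Finset.prod_const, Finset.card_range, ← pow_mul,
      padicValNat.prime_pow]
  · have : ∀ i, ∃ n : ℕ, i < r → n ≠ 0 ∧
        Nat.card (ℤ_[p][X] ⧸ Ideal.span {E i, X * f}) = p ^ p * n := by
      intro i
      by_cases hi : i < r
      · have hn := hnd' i hi
        obtain ⟨c, d, hd1, hd, hm, h, hE, hc⟩ := cyc_props (p := p) i
        rw [hf] at hn
        obtain ⟨n, hn0, hn⟩ := case2 hm h hd hE hc (p - 1) hd1 u g hn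
        refine ⟨n, fun _ => ⟨hn0, ?_⟩⟩
        rw [hstep i hi, hf, hn, ← mul_assoc, ← pow_succ', Nat.sub_add_cancel hpp.one_le]
      · exact ⟨0, fun h => absurd h hi⟩
    choose n hn using this
    rw [Finset.prod_congr rfl (fun i hi => (hn i (Finset.mem_range.1 hi)).2),
      Finset.prod_mul_distrib, Finset.prod_const, Finset.card_range, ← pow_mul,
      padicValNat.mul (pow_ne_zero _ hpp.ne_zero)
        (Finset.prod_ne_zero_iff.2 fun i hi => (hn i (Finset.mem_range.1 hi)).1),
      padicValNat.prime_pow]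
    rcases Nat.eq_zero_or_pos (padicValNat p (∏ i ∈ Finset.range r, n i)) with h0 | h0
    · left; exact ⟨p, by omega, le_rfl, by rw [h0, add_zero]⟩
    · right; omega

theorem reduction {R : Type*} [CommRing R] (r : ℕ) (P : ℤ_[p][X]) (hPm : P.Monic)
    (hP0 : P.coeff 0 = p ^ r)
    (φ : ℤ_[p][X] →+* R) (hφ : Function.Surjective φ) (hker : ∀ q, φ q = 0 ↔ X * P ∣ q)
    (J : Ideal R) (hNJ : φ P ∈ J)
    (e : J ≃ₗ[R] (Ideal.span {φ P, (p : R) ^ r} : Ideal R)) :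
    ∃ f, (∀ z, P ∣ X * f * z → P ∣ z) ∧
      Nat.card (R ⧸ J) = Nat.card (ℤ_[p][X] ⧸ Ideal.span {P, X * f}) := by
  have hpp : p.Prime := Fact.out
  have hp0 : (p : ℤ_[p]) ^ r ≠ 0 := pow_ne_zero _ (by exact_mod_cast hpp.ne_zero)
  have hP00 : P ≠ 0 := hPm.ne_zero
  have hXN : φ X * φ P = 0 := by rw [← map_mul, hker]
  have hφp : φ (C ((p : ℤ_[p]) ^ r)) = (p : R) ^ r := by simp
  have hN2 : φ P * ((p : R) ^ r - φ P) = 0 := by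
    rw [← hφp, ← map_sub, ← map_mul, hker]
    refine ⟨-P.divX, ?_⟩
    have := divX_mul_X_add P
    rw [hP0] at this
    linear_combination P * this
  set I : Ideal R := Ideal.span {φ P, (p : R) ^ r} with hI
  have hN : φ P ∈ I := Ideal.subset_span (by simp)
  have hp : (p : R) ^ r ∈ I := Ideal.subset_span (by simp)
  let n : I := ⟨φ P, hN⟩
  let m : I := ⟨(p : R) ^ r - φ P, I.sub_mem hp hN⟩
  obtain ⟨a, ha⟩ := hφ (e.symm n : R)
  obtain ⟨b, hb⟩ := hφ (e.symm m : R)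
  have ha' : P ∣ a := by
    have h1 : φ X • n = 0 := Subtype.ext hXN
    have h2 : φ X • e.symm n = 0 := by rw [← map_smul, h1, map_zero]
    have h3 : φ (X * a) = 0 := by
      rw [map_mul, ha]; exact congrArg Subtype.val h2
    rw [hker] at h3
    exact (mul_dvd_mul_iff_left X_ne_zero).1 h3
  have hb' : X ∣ b := by
    have h1 : φ P • m = 0 := Subtype.ext hN2
    have h2 : φ P • e.symm m = 0 := by rw [← map_smul, h1, map_zero]
    have h3 : φ (P * b) = 0 := by
      rw [map_mul, hb]; exact congrArg Subtype.val h2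
    rw [hker, mul_comm] at h3
    exact (mul_dvd_mul_iff_left hP00).1 h3
  obtain ⟨f, rfl⟩ := hb'
  refine ⟨f, ?_, ?_⟩
  · rintro z ⟨c, hc⟩
    -- X ∣ c
    have hXc : X ∣ c := by
      have h1 : X ∣ P * c := ⟨f * z, by rw [← hc]; ring⟩
      rcases prime_X.dvd_or_dvd h1 with h | h
      · rw [X_dvd_iff, hP0] at h; exact absurd h hp0
      · exact h
    obtain ⟨c, rfl⟩ := hXc
    have h1 : φ (z * (X * f)) = 0 := (hker _).2 ⟨c, by linear_combination hc⟩
    have h2 : φ z • e.symm m = 0 := by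
      apply Subtype.ext
      change φ z * (e.symm m : R) = 0
      rw [← hb, ← map_mul, h1]
    have h3 : φ z • m = 0 := by
      apply e.symm.injective
      rw [map_smul, h2, map_zero]
    have h4 : φ z * ((p : R) ^ r - φ P) = 0 := congrArg Subtype.val h3
    rw [← hφp, ← map_sub, ← map_mul, hker] at h4
    obtain ⟨q, hq⟩ := h4
    have h5 : P ∣ ((p : ℤ_[p]) ^ r) • z := by
      rw [smul_eq_C_mul]
      exact ⟨X * q + z, by linear_combination hq⟩
    rw [← modByMonic_eq_zero_iff_dvd hPm, smul_modByMonic, smul_eq_zero] at h5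
    exact (modByMonic_eq_zero_iff_dvd hPm).1 (h5.resolve_left hp0)
  · have hJ : Ideal.span {P, X * f} = J.comap φ := by
      ext q
      rw [Ideal.mem_comap, Ideal.mem_span_pair]
      constructor
      · rintro ⟨x, y, rfl⟩
        rw [map_add, map_mul, map_mul φ y, hb]
        exact J.add_mem (J.mul_mem_left _ hNJ) (J.mul_mem_left _ (e.symm m).2)
      · intro hq
        let j : J := ⟨φ q, hq⟩
        obtain ⟨x, y, hxy⟩ := Ideal.mem_span_pair.1 (e j).2
        obtain ⟨x, rfl⟩ := hφ x
        obtain ⟨y, rfl⟩ := hφ y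
        have h1 : e j = (φ x + φ y) • n + φ y • m := by
          apply Subtype.ext
          rw [← hxy]
          change _ = (φ x + φ y) * φ P + φ y * ((p : R) ^ r - φ P)
          ring
        have h2 : j = (φ x + φ y) • e.symm n + φ y • e.symm m := by
          rw [← map_smul, ← map_smul, ← map_add, ← h1, LinearEquiv.symm_apply_apply]
        have h3 : φ q = (φ x + φ y) * φ a + φ y * φ (X * f) := by
          rw [ha, hb]; exact congrArg Subtype.val h2
        have h4 : φ (q - ((x + y) * a + y * (X * f))) = 0 := by
          rw [map_sub, h3]; simp only [map_add, map_mul]; ring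
        rw [hker] at h4
        obtain ⟨s, hs⟩ := h4
        obtain ⟨a', rfl⟩ := ha'
        exact ⟨(x + y) * a' + X * s, y, by linear_combination -hs⟩
    rw [hJ]
    have hs : Function.Surjective ((Ideal.Quotient.mk J).comp φ) :=
      Ideal.Quotient.mk_surjective.comp hφ
    have hk : J.comap φ = RingHom.ker ((Ideal.Quotient.mk J).comp φ) := by
      rw [← RingHom.comap_ker, Ideal.mk_ker]
    rw [hk]
    exact (Nat.card_congr (RingHom.quotientKerEquivOfSurjective hs).toEquiv).symm

end

section
variable {p : ℕ} [Fact p.Prime] {Γ : Type} [CommGroup Γ] [Fintype Γ]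

theorem aeval_surj (s : Γ) (hs : ∀ x, x ∈ Subgroup.zpowers s) :
    Function.Surjective (aeval (R := ℤ_[p]) (MonoidAlgebra.single s (1 : ℤ_[p]) - 1)) := by
  intro x
  change x ∈ (aeval (R := ℤ_[p]) (MonoidAlgebra.single s (1 : ℤ_[p]) - 1)).range
  induction x using MonoidAlgebra.induction_on with
  | of g =>
    obtain ⟨k, rfl⟩ := mem_powers_iff_mem_zpowers.2 (hs g)
    refine ⟨(X + 1) ^ k, ?_⟩
    simp [MonoidAlgebra.single_pow]
  | add x y hx hy => exact Subalgebra.add_mem _ hx hy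
  | smul r x hx => exact Subalgebra.smul_mem _ hx r

theorem aeval_ker' (s : Γ) (n : ℕ) (hn : orderOf s = n) (hn0 : n ≠ 0) (q : ℤ_[p][X]) 
    (hq : aeval (MonoidAlgebra.single s (1 : ℤ_[p])) q = 0) : X ^ n - 1 ∣ q := by
  have hmon : (X ^ n - 1 : ℤ_[p][X]).Monic := by simpa using monic_X_pow_sub_C (1 : ℤ_[p]) hn0
  have hdeg : (X ^ n - 1 : ℤ_[p][X]).natDegree = n := by simpa using natDegree_X_pow_sub_C (n := n) (r := (1 : ℤ_[p]))
  rw [← modByMonic_eq_zero_iff_dvd hmon]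
  have h0 : aeval (MonoidAlgebra.single s (1 : ℤ_[p])) (X ^ n - 1 : ℤ_[p][X]) = 0 := by
    simp [MonoidAlgebra.single_pow, ← hn, pow_orderOf_eq_one, MonoidAlgebra.one_def]
  have h1 : aeval (MonoidAlgebra.single s (1 : ℤ_[p])) (q %ₘ (X ^ n - 1)) = 0 := by
    rw [modByMonic_eq_sub_mul_div _ , map_sub, map_mul, h0, hq]; simp
  set t := q %ₘ (X ^ n - 1) with ht
  have htd : t.natDegree < n := by
    have := natDegree_modByMonic_lt q hmon (by
      intro h; rw [h] at hdeg; simp at hdeg; exact hn0 hdeg.symm)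
    rwa [hdeg] at this
  rw [aeval_eq_sum_range' htd] at h1
  ext k
  by_cases hk : k < n
  · have h2 := congrArg (fun y : MonoidAlgebra ℤ_[p] Γ => y.coeff (s ^ k)) h1
    simp only [MonoidAlgebra.single_pow, one_pow, MonoidAlgebra.coeff_sum, MonoidAlgebra.coeff_smul, MonoidAlgebra.coeff_single] at h2
    rw [Finset.sum_apply', Finset.sum_eq_single k] at h2
    · simpa using h2
    · intro b hb hbk
      have hne : s ^ b ≠ s ^ k := fun h =>
        hbk (pow_injOn_Iio_orderOf (by rw [hn]; simpa using hb) (by rw [hn]; simpa using hk) h)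
      simp [Finsupp.single_apply, hne]
    · intro h; exact absurd (Finset.mem_range.2 hk) h
  · rw [coeff_eq_zero_of_natDegree_lt (by omega), coeff_zero]

end

theorem stmt0 (p r : ℕ) [Fact p.Prime] (hp : Odd p) (hr : 2 ≤ r)
    (Γ : Type) [CommGroup Γ] [Fintype Γ] [IsCyclic Γ]
    (hcard : Fintype.card Γ = p ^ r)
    (N : MonoidAlgebra ℤ_[p] Γ) (hN : N = ∑ g : Γ, MonoidAlgebra.single g 1)
    (J : Ideal (MonoidAlgebra ℤ_[p] Γ))
    (hNJ : Ideal.span {N} ≤ J)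
    (hiso : Nonempty (J ≃ₗ[MonoidAlgebra ℤ_[p] Γ]
      (Ideal.span {N, (p : MonoidAlgebra ℤ_[p] Γ) ^ r} : Ideal (MonoidAlgebra ℤ_[p] Γ)))) :
    (∃ k : ℕ, 1 ≤ k ∧ k ≤ p ∧
        padicValNat p (Nat.card (MonoidAlgebra ℤ_[p] Γ ⧸ J)) = k * r) ∨
      p * r < padicValNat p (Nat.card (MonoidAlgebra ℤ_[p] Γ ⧸ J)) := by
  classical
  have hpp : p.Prime := Fact.out
  obtain ⟨s, hs⟩ := IsCyclic.exists_generator (α := Γ)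
  have hn0 : p ^ r ≠ 0 := pow_ne_zero _ hpp.ne_zero
  have hord : orderOf s = p ^ r := by
    rw [orderOf_eq_card_of_forall_mem_zpowers hs, Nat.card_eq_fintype_card, hcard]
  set P : ℤ_[p][X] := ∏ i ∈ Finset.range r, (cyclotomic (p ^ (i + 1)) ℤ_[p]).comp (X + 1) with hP
  have hXP : X * P = (X + 1) ^ p ^ r - 1 := prod_cyc r
  have hgeom : P = ∑ k ∈ Finset.range (p ^ r), (X + 1) ^ k := by
    apply mul_left_cancel₀ (X_ne_zero (R := ℤ_[p]))
    rw [hXP, ← mul_geom_sum]; simp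
  have hPm : P.Monic := monic_prod_of_monic _ _ fun i _ => by
    obtain ⟨c, d, -, -, h, -⟩ := cyc_props (p := p) i; exact h
  have hP0 : P.coeff 0 = p ^ r := by
    rw [hgeom, coeff_zero_eq_eval_zero, eval_finsetSum]; simp
  let φ := aeval (R := ℤ_[p]) (MonoidAlgebra.single s (1 : ℤ_[p]) - 1)
  have hφP : φ P = N := by
    rw [hN, hgeom, ← IsCyclic.image_range_card hs, Finset.sum_image, map_sum, Nat.card_eq_fintype_card,
      hcard]
    · refine Finset.sum_congr rfl fun k _ => ?_
      simp [φ, MonoidAlgebra.single_pow]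
    · rw [Nat.card_eq_fintype_card, hcard, ← hord]
      intro a ha b hb hab
      exact pow_injOn_Iio_orderOf (by simpa using ha) (by simpa using hb) hab
  have hker : ∀ q, (φ : ℤ_[p][X] →+* MonoidAlgebra ℤ_[p] Γ) q = 0 ↔ X * P ∣ q := by
    intro q
    rw [hXP]
    constructor
    · intro h
      have h1 : aeval (MonoidAlgebra.single s (1 : ℤ_[p])) (q.comp (X - 1)) = 0 := by
        rw [aeval_comp]; simpa [φ] using h
      obtain ⟨c, hc⟩ := aeval_ker' s _ hord hn0 _ h1
      refine ⟨c.comp (X + 1), ?_⟩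
      have h2 := congrArg (fun y => comp y (X + 1)) hc
      simpa [comp_assoc] using h2
    · rintro ⟨c, rfl⟩
      simp [φ, MonoidAlgebra.single_pow, ← hord, pow_orderOf_eq_one, MonoidAlgebra.one_def]
  rw [← hφP] at hiso hNJ
  obtain ⟨e⟩ := hiso
  obtain ⟨f, hreg, hc⟩ := reduction r P hPm hP0 (φ : ℤ_[p][X] →+* MonoidAlgebra ℤ_[p] Γ) (aeval_surj s hs) hker J
    (hNJ (Ideal.mem_span_singleton_self _)) e
  rw [hc]
  exact poly_main r f P hP hreg
end

section
/- Let Γ be a finite abelian group that is neither cyclic nor of prime-power order. Let S be the set of pairs (I, D) of subgroups I ⊆ D ⊆ Γ with I nontrivial elementary and D/I cyclic, let S′ = {(I,D) ∈ S : D is non-cyclic or #I is a prime power}, and let T be the set of tuples (p, H, I*, D*) with p prime, H ⊆ Γ a subgroup with Γ/H cyclic of order prime to p, and I* ⊆ D* ⊆ Γ_p subgroups with I* nontrivial and D*/I* cyclic. Then #S′ > #T. -/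
/-- The subgroup of elements of order coprime to `p`; the quotient by it is the
maximal p-quotient Γ_p of the finite abelian group Γ. -/
def primeToPart (Γ : Type) [CommGroup Γ] [Fintype Γ] (p : ℕ) : Subgroup Γ where
  carrier := {g | Nat.Coprime (orderOf g) p}
  one_mem' := by simp [Nat.Coprime]
  mul_mem' := by
    intro a b ha hb
    exact Nat.Coprime.coprime_dvd_left
      (((Commute.all a b).orderOf_mul_dvd_lcm).trans
        (Nat.lcm_dvd (dvd_mul_right _ _) (dvd_mul_left _ _)))
      (Nat.Coprime.mul ha hb)
  inv_mem' := by
    intro a ha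
    simpa [orderOf_inv] using ha

/-- The maximal p-quotient of a finite abelian group. -/
abbrev maxPQuotient (Γ : Type) [CommGroup Γ] [Fintype Γ] (p : ℕ) :=
  Γ ⧸ primeToPart Γ p

/-- A group is p-elementary if it is the (internal) product of a p-group and a cyclic
group; elementary if p-elementary for some prime p. -/
def IsElementary (G : Type) [Group G] : Prop :=
  ∃ p : ℕ, p.Prime ∧ ∃ A B : Subgroup G, IsPGroup p A ∧ IsCyclic B ∧
    A ⊓ B = ⊥ ∧ A ⊔ B = ⊤

/-- The set S of pairs (I, D) with I ⊆ D ⊆ Γ, I nontrivial elementary, D/I cyclic. -/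
def SPairs (Γ : Type) [CommGroup Γ] [Fintype Γ] : Set (Subgroup Γ × Subgroup Γ) :=
  {x | x.1 ≠ ⊥ ∧ x.1 ≤ x.2 ∧ IsElementary ↥x.1 ∧
    IsCyclic (↥x.2 ⧸ Subgroup.subgroupOf x.1 x.2)}

/-- The set T of tuples (p, H, I*, D*) with p prime, H ⊆ Γ with Γ/H cyclic of order prime
to p, I* ⊆ D* ⊆ Γ_p with I* nontrivial and D*/I* cyclic. -/
def TSet (Γ : Type) [CommGroup Γ] [Fintype Γ] :
    Set (Σ q : ℕ, Subgroup Γ × Subgroup (maxPQuotient Γ q) × Subgroup (maxPQuotient Γ q)) :=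
  {x | x.1.Prime ∧ IsCyclic (Γ ⧸ x.2.1) ∧ Nat.Coprime (Nat.card (Γ ⧸ x.2.1)) x.1 ∧
    x.2.2.1 ≠ ⊥ ∧ x.2.2.1 ≤ x.2.2.2 ∧
    IsCyclic (↥x.2.2.2 ⧸ Subgroup.subgroupOf x.2.2.1 x.2.2.2)}
/-- The subgroup of elements of `p`-power order. -/
def pPart (Γ : Type) [CommGroup Γ] (p : ℕ) : Subgroup Γ where
  carrier := {g | ∃ k : ℕ, g ^ (p ^ k) = 1}
  one_mem' := ⟨0, by simp⟩
  mul_mem' := by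
    rintro a b ⟨k, hk⟩ ⟨l, hl⟩
    refine ⟨k + l, ?_⟩
    rw [mul_pow, pow_add, pow_mul, hk, mul_comm (p ^ k), pow_mul b, hl]
    simp
  inv_mem' := by
    rintro a ⟨k, hk⟩
    exact ⟨k, by rw [inv_pow, hk, inv_one]⟩

lemma exists_dual (Γ : Type) [CommGroup Γ] [Fintype Γ] :
    ∃ φ : Subgroup Γ → Subgroup Γ, Function.Injective φ ∧
      ∀ H, Nonempty (φ H ≃* Γ ⧸ H) := by
  have : NeZero (Monoid.exponent Γ) := ⟨Monoid.exponent_ne_zero_of_finite⟩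
  have hM : HasEnoughRootsOfUnity ℂ (Monoid.exponent Γ) := inferInstance
  obtain ⟨e⟩ := CommGroup.monoidHom_mulEquiv_of_hasEnoughRootsOfUnity Γ ℂ
  refine ⟨fun H => (MonoidHom.domRestrictHom H ℂˣ).ker.map (e : (Γ →* ℂˣ) →* Γ), ?_, ?_⟩
  · intro H₁ H₂ h
    have h2 := Subgroup.map_injective (f := (e : (Γ →* ℂˣ) →* Γ)) e.injective h
    exact (CommGroup.subgroupOrderIsoSubgroupMonoidHom Γ ℂ).injective h2
  · intro H
    have : HasEnoughRootsOfUnity ℂ (Monoid.exponent (Γ ⧸ H)) :=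
      hM.of_dvd ℂ <| Group.exponent_quotient_dvd H
    obtain ⟨e'⟩ := CommGroup.monoidHom_mulEquiv_of_hasEnoughRootsOfUnity (Γ ⧸ H) ℂ
    exact ⟨((e.subgroupMap (MonoidHom.domRestrictHom H ℂˣ).ker).symm.trans
      (MonoidHom.domRestrictHomKerEquiv ℂˣ H)).trans e'⟩

lemma pPart_inf (Γ : Type) [CommGroup Γ] [Fintype Γ] (p : ℕ) :
    pPart Γ p ⊓ primeToPart Γ p = ⊥ := by
  rw [eq_bot_iff]
  rintro g ⟨⟨k, hk⟩, hg⟩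
  have h1 : Nat.Coprime (orderOf g) p := hg
  have h2 := orderOf_dvd_of_pow_eq_one hk
  have := Nat.Coprime.eq_one_of_dvd (h1.pow_right k) h2
  simpa using this

lemma pPart_sup (Γ : Type) [CommGroup Γ] [Fintype Γ] {p : ℕ} (hp : p.Prime) :
    pPart Γ p ⊔ primeToPart Γ p = ⊤ := by
  rw [eq_top_iff]
  intro g _
  obtain ⟨a, m, hm, hn⟩ := Nat.exists_eq_pow_mul_and_not_dvd
    (orderOf_pos g).ne' p hp.ne_one
  have hc : Nat.Coprime m p := ((Nat.Prime.coprime_iff_not_dvd hp).2 hm).symm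
  have hb : IsCoprime (m : ℤ) ((p ^ a : ℕ) : ℤ) :=
    Nat.isCoprime_iff_coprime.2 (hc.pow_right a)
  obtain ⟨u, v, huv⟩ := hb
  have hg : g = (g ^ m) ^ u * (g ^ (p ^ a)) ^ v := by
    rw [← zpow_natCast, ← zpow_natCast, ← zpow_mul, ← zpow_mul, ← zpow_add, mul_comm (m : ℤ),
      mul_comm _ v, huv, zpow_one]
  rw [hg]
  refine Subgroup.mul_mem_sup (Subgroup.zpow_mem _ ?_ _) (Subgroup.zpow_mem _ ?_ _)
  · change ∃ k : ℕ, (g ^ m) ^ (p ^ k) = 1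
    refine ⟨a, ?_⟩
    rw [← pow_mul, mul_comm, ← hn, pow_orderOf_eq_one]
  · change Nat.Coprime (orderOf (g ^ p ^ a)) p
    refine Nat.Coprime.coprime_dvd_left (orderOf_dvd_of_pow_eq_one ?_) hc
    rw [← pow_mul, ← hn, pow_orderOf_eq_one]

lemma cyclic_quot_iff {G : Type} [CommGroup G] {I D : Subgroup G} (h : I ≤ D) :
    IsCyclic (↥D ⧸ Subgroup.subgroupOf I D) ↔ ∃ d, D = I ⊔ Subgroup.zpowers d := by
  constructor
  · rintro ⟨x, hx⟩
    obtain ⟨d, rfl⟩ := QuotientGroup.mk_surjective x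
    refine ⟨d, le_antisymm ?_ (sup_le h (by simp))⟩
    intro y hy
    obtain ⟨n, hn⟩ := hx (QuotientGroup.mk ⟨y, hy⟩)
    have hn' : (QuotientGroup.mk (d ^ n) : ↥D ⧸ Subgroup.subgroupOf I D) =
      QuotientGroup.mk ⟨y, hy⟩ := hn
    rw [QuotientGroup.eq, Subgroup.mem_subgroupOf] at hn'
    have : y = ((d : G) ^ n)⁻¹ * y * ((d : G) ^ n) := by
      rw [mul_comm, mul_inv_cancel_left]
    rw [this]
    exact Subgroup.mul_mem_sup (by simpa using hn') (Subgroup.zpow_mem_zpowers _ _)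
  · rintro ⟨d, hd⟩
    have hdD : d ∈ D := by
      rw [hd]; exact Subgroup.mem_sup_right (Subgroup.mem_zpowers d)
    refine ⟨QuotientGroup.mk ⟨d, hdD⟩, ?_⟩
    intro x
    obtain ⟨⟨y, hy⟩, rfl⟩ := QuotientGroup.mk_surjective x
    have hy' := hy
    rw [hd, Subgroup.mem_sup] at hy'
    obtain ⟨i, hi, z, ⟨n, hn⟩, hyz⟩ := hy'
    refine ⟨n, ?_⟩
    change (QuotientGroup.mk (⟨d, hdD⟩ ^ n) : ↥D ⧸ Subgroup.subgroupOf I D) = _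
    rw [QuotientGroup.eq, Subgroup.mem_subgroupOf]
    have hn' : d ^ n = z := hn
    have : (d ^ n)⁻¹ * y = i := by rw [← hyz, hn', mul_comm, mul_inv_cancel_right]
    simpa [this] using hi

lemma zpowers_sup {G : Type} [CommGroup G] [Finite G] {a b : G}
    (h : Nat.Coprime (orderOf a) (orderOf b)) :
    Subgroup.zpowers a ⊔ Subgroup.zpowers b = Subgroup.zpowers (a * b) := by
  have key : ∀ a b : G, Nat.Coprime (orderOf a) (orderOf b) →
      a ∈ Subgroup.zpowers (a * b) := by
    intro a b h
    obtain ⟨u, v, huv⟩ := Nat.isCoprime_iff_coprime.2 h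
    refine ⟨v * orderOf b, ?_⟩
    change (a * b) ^ (v * (orderOf b : ℤ)) = a
    have h1 : b ^ (v * (orderOf b : ℤ)) = 1 := by
      rw [mul_comm, zpow_mul, zpow_natCast, pow_orderOf_eq_one, one_zpow]
    have h2 : a ^ (u * (orderOf a : ℤ)) = 1 := by
      rw [mul_comm, zpow_mul, zpow_natCast, pow_orderOf_eq_one, one_zpow]
    have h3 : a ^ (u * (orderOf a : ℤ)) * a ^ (v * (orderOf b : ℤ)) = a := by
      rw [← zpow_add, huv, zpow_one]
    rw [mul_zpow, h1, mul_one]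
    rwa [h2, one_mul] at h3
  apply le_antisymm
  · rw [sup_le_iff, Subgroup.zpowers_le, Subgroup.zpowers_le]
    refine ⟨key a b h, ?_⟩
    rw [mul_comm]
    exact key b a h.symm
  · rw [Subgroup.zpowers_le]
    exact Subgroup.mul_mem_sup (Subgroup.mem_zpowers a) (Subgroup.mem_zpowers b)

lemma isPGroup_of_le_pPart {Γ : Type} [CommGroup Γ] {p : ℕ} {I : Subgroup Γ}
    (h : I ≤ pPart Γ p) : IsPGroup p I := by
  rintro ⟨x, hx⟩
  obtain ⟨k, hk⟩ := h hx
  exact ⟨k, by ext; simpa using hk⟩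

lemma isElementary_of_isPGroup {G : Type} [Group G] {p : ℕ} (hp : p.Prime)
    (h : IsPGroup p G) : IsElementary G :=
  ⟨p, hp, ⊤, ⊥, h.to_subgroup _, inferInstance, by simp, by simp⟩

lemma card_of_isPGroup {Γ : Type} [CommGroup Γ] [Finite Γ] {p : ℕ} (hp : p.Prime)
    {I : Subgroup Γ} (h : IsPGroup p I) (hI : I ≠ ⊥) :
    ∃ k, k ≠ 0 ∧ Nat.card I = p ^ k := by
  have : Fact p.Prime := ⟨hp⟩
  obtain ⟨k, hk⟩ := IsPGroup.iff_card.1 h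
  refine ⟨k, ?_, hk⟩
  rintro rfl
  exact hI (Subgroup.card_eq_one.1 (by simpa using hk))

section Map
variable {Γ : Type} [CommGroup Γ] [Fintype Γ]

/-- the `p`-part of the preimage -/
def lift' (p : ℕ) (X : Subgroup (maxPQuotient Γ p)) : Subgroup Γ :=
  X.comap (QuotientGroup.mk' (primeToPart Γ p)) ⊓ pPart Γ p

lemma lift'_le (p : ℕ) (X : Subgroup (maxPQuotient Γ p)) : lift' p X ≤ pPart Γ p := inf_le_right

lemma lift'_sup {p : ℕ} (hp : p.Prime) (X : Subgroup (maxPQuotient Γ p)) :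
    lift' p X ⊔ primeToPart Γ p = X.comap (QuotientGroup.mk' (primeToPart Γ p)) := by
  have hN : primeToPart Γ p ≤ X.comap (QuotientGroup.mk' (primeToPart Γ p)) := by
    intro g hg
    have : (QuotientGroup.mk' (primeToPart Γ p)) g = 1 :=
      (QuotientGroup.eq_one_iff g).2 hg
    rw [Subgroup.mem_comap, this]
    exact X.one_mem
  rw [lift', inf_comm, sup_comm, ← sup_inf_assoc_of_le _ hN, sup_comm, pPart_sup Γ hp, top_inf_eq]

lemma lift'_map {p : ℕ} (hp : p.Prime) (X : Subgroup (maxPQuotient Γ p)) :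
    (lift' p X ⊔ primeToPart Γ p).map (QuotientGroup.mk' (primeToPart Γ p)) = X := by
  rw [lift'_sup hp, Subgroup.map_comap_eq_self_of_surjective (QuotientGroup.mk'_surjective _)]

lemma lift'_inj {p : ℕ} (hp : p.Prime) {X Y : Subgroup (maxPQuotient Γ p)}
    (h : lift' p X = lift' p Y) : X = Y := by
  rw [← lift'_map hp X, h, lift'_map hp]

lemma lift'_ne_bot {p : ℕ} (hp : p.Prime) {X : Subgroup (maxPQuotient Γ p)}
    (h : X ≠ ⊥) : lift' p X ≠ ⊥ := by
  intro h0
  apply h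
  rw [← lift'_map hp X, h0, bot_sup_eq, Subgroup.map_eq_bot_iff, QuotientGroup.ker_mk']

lemma lift'_cyclic {p : ℕ} (hp : p.Prime) {I D : Subgroup (maxPQuotient Γ p)} 
    (h : ∃ d, D = I ⊔ Subgroup.zpowers d) :
    ∃ d ∈ pPart Γ p, lift' p D = lift' p I ⊔ Subgroup.zpowers d := by
  obtain ⟨d, hd⟩ := h
  obtain ⟨g, rfl⟩ := QuotientGroup.mk'_surjective _ d
  have hg : g ∈ pPart Γ p ⊔ primeToPart Γ p := by rw [pPart_sup Γ hp]; trivial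
  obtain ⟨x, hx, y, hy, rfl⟩ := Subgroup.mem_sup.1 hg
  have hxy : QuotientGroup.mk' (primeToPart Γ p) (x * y) = QuotientGroup.mk' (primeToPart Γ p) x := by
    rw [map_mul]
    have : (QuotientGroup.mk' (primeToPart Γ p)) y = 1 :=
      (QuotientGroup.eq_one_iff y).2 hy
    rw [this, mul_one]
  rw [hxy] at hd
  refine ⟨x, hx, ?_⟩
  have e : D.comap (QuotientGroup.mk' (primeToPart Γ p)) =
      Subgroup.zpowers x ⊔ I.comap (QuotientGroup.mk' (primeToPart Γ p)) := by
    have h1 : (Subgroup.zpowers x ⊔ lift' p I ⊔ primeToPart Γ p).map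
      (QuotientGroup.mk' (primeToPart Γ p)) = D := by
      rw [sup_assoc, Subgroup.map_sup, lift'_map hp, MonoidHom.map_zpowers, hd, sup_comm]
    rw [← h1, Subgroup.comap_map_eq, QuotientGroup.ker_mk', sup_assoc, sup_assoc, sup_idem, lift'_sup hp]
  rw [lift', e, sup_inf_assoc_of_le, sup_comm]
  · rfl
  · rwa [Subgroup.zpowers_le]

end Map

lemma exists_extra (Γ : Type) [CommGroup Γ] [Fintype Γ]
    (hnc : ¬ IsCyclic Γ) (hnpp : ¬ IsPrimePow (Nat.card Γ)) :
    ∃ I : Subgroup Γ, I ≠ ⊥ ∧ IsElementary I ∧ ¬ IsCyclic I ∧ ¬ IsPrimePow (Nat.card I) := by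
  obtain ⟨p, hp, P, hP⟩ : ∃ p : ℕ, p.Prime ∧ ∃ P : Sylow p Γ, ¬ IsCyclic P := by
    by_contra! h
    have : IsZGroup Γ := ⟨h⟩
    exact hnc inferInstance
  have : Fact p.Prime := ⟨hp⟩
  have hPb : (P : Subgroup Γ) ≠ ⊥ := by
    intro h
    apply hP
    change IsCyclic (P : Subgroup Γ)
    rw [h]
    infer_instance
  obtain ⟨k, hk0, hk⟩ := card_of_isPGroup hp P.2 hPb
  obtain ⟨q, hq, hqp, hqd⟩ : ∃ q : ℕ, q.Prime ∧ q ≠ p ∧ q ∣ Nat.card Γ := by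
    by_contra! h
    have h1 : Nat.card Γ = p ^ (Nat.card Γ).primeFactorsList.length :=
      Nat.eq_prime_pow_of_unique_prime_dvd Nat.card_pos.ne' (fun {d} hd hdd => by
        by_contra hne
        exact h d hd hne hdd)
    apply hnpp
    rw [h1]
    refine hp.isPrimePow.pow ?_
    intro h0
    rw [h0, pow_zero] at h1
    have := Subgroup.card_subgroup_dvd_card (P : Subgroup Γ)
    rw [h1, hk, Nat.dvd_one, Nat.pow_eq_one] at this
    rcases this with h | h
    · exact hp.ne_one h
    · exact hk0 h
  have : Fact q.Prime := ⟨hq⟩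
  obtain ⟨g, hg⟩ := exists_prime_orderOf_dvd_card' q hqd
  refine ⟨(P : Subgroup Γ) ⊔ Subgroup.zpowers g, ?_, ?_, ?_, ?_⟩
  · exact fun h => hPb (eq_bot_iff.2 (h ▸ le_sup_left))
  · refine ⟨p, hp, (P : Subgroup Γ).subgroupOf _, (Subgroup.zpowers g).subgroupOf _, ?_, ?_, ?_, ?_⟩
    · exact P.2.of_equiv (Subgroup.subgroupOfEquivOfLe le_sup_left).symm
    · exact isCyclic_of_surjective _
        (Subgroup.subgroupOfEquivOfLe (le_sup_right : Subgroup.zpowers g ≤ (P : Subgroup Γ) ⊔ Subgroup.zpowers g)).symm.surjective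
    · have hd : (P : Subgroup Γ) ⊓ Subgroup.zpowers g = ⊥ := by
        apply Subgroup.inf_eq_bot_of_coprime
        rw [hk, Nat.card_zpowers, hg]
        exact Nat.Coprime.pow_left _ ((Nat.coprime_primes hp hq).2 hqp.symm)
      rw [Subgroup.subgroupOf, Subgroup.subgroupOf, ← Subgroup.comap_inf, hd]
      exact Subgroup.bot_subgroupOf _
    · rw [← Subgroup.subgroupOf_sup le_sup_left le_sup_right, Subgroup.subgroupOf_self]
  · intro h
    exact hP (Subgroup.isCyclic_of_le (le_sup_left : (P : Subgroup Γ) ≤ (P : Subgroup Γ) ⊔ Subgroup.zpowers g))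
  · intro h
    have h1 : p ∣ Nat.card ↥((P : Subgroup Γ) ⊔ Subgroup.zpowers g) :=
      ((dvd_pow_self p hk0).trans hk.symm.dvd).trans
        (Subgroup.card_dvd_of_le (le_sup_left : (P : Subgroup Γ) ≤ (P : Subgroup Γ) ⊔ Subgroup.zpowers g))
    have h2 : q ∣ Nat.card ↥((P : Subgroup Γ) ⊔ Subgroup.zpowers g) := by
      have := Subgroup.card_dvd_of_le (le_sup_right : Subgroup.zpowers g ≤ (P : Subgroup Γ) ⊔ Subgroup.zpowers g)
      rwa [Nat.card_zpowers, hg] at this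
    obtain ⟨r, n, hr, hn, hrn⟩ := h
    rw [← hrn] at h1 h2
    have hr := hr.nat_prime
    exact hqp (((Nat.prime_dvd_prime_iff_eq hq hr).1 (hq.dvd_of_dvd_pow h2)).trans
      ((Nat.prime_dvd_prime_iff_eq hp hr).1 (hp.dvd_of_dvd_pow h1)).symm)

lemma exists_inj (Γ : Type) [CommGroup Γ] [Fintype Γ] :
    ∃ F : {x // x ∈ TSet Γ} → Subgroup Γ × Subgroup Γ, Function.Injective F ∧
      ∀ x, F x ∈ SPairs Γ ∧ IsPrimePow (Nat.card (F x).1) := by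
  obtain ⟨φ, hφ, hφe⟩ := exists_dual Γ
  have hK : ∀ (p : ℕ) (H : Subgroup Γ), Nat.Coprime (Nat.card (Γ ⧸ H)) p →
      φ H ≤ primeToPart Γ p := by
    intro p H h g hg
    obtain ⟨e⟩ := hφe H
    rw [← Nat.card_congr e.toEquiv] at h
    exact Nat.Coprime.coprime_dvd_left (Subgroup.orderOf_dvd_natCard _ hg) h
  refine ⟨fun x => (lift' x.1.1 x.1.2.2.1, lift' x.1.1 x.1.2.2.2 ⊔ φ x.1.2.1), ?_, ?_⟩
  · rintro ⟨⟨p, H, I, D⟩, hp, hc, hcop, hI, hID, hq⟩ ⟨⟨p', H', I', D'⟩, hp', hc', hcop', hI', hID', hq'⟩ h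
    dsimp only at *
    obtain ⟨h1, h2⟩ := Prod.mk.inj h
    obtain rfl : p = p' := by
      obtain ⟨k, hk0, hk⟩ := card_of_isPGroup hp (isPGroup_of_le_pPart (lift'_le p I))
        (lift'_ne_bot hp hI)
      obtain ⟨l, hl0, hl⟩ := card_of_isPGroup hp' (isPGroup_of_le_pPart (lift'_le p' I'))
        (lift'_ne_bot hp' hI')
      rw [h1, hl] at hk
      have : p ∣ p' ^ l := hk ▸ dvd_pow_self p hk0
      exact (Nat.prime_dvd_prime_iff_eq hp hp').1 (hp.dvd_of_dvd_pow this)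
    have a1 : ∀ (D : Subgroup (maxPQuotient Γ p)) (H : Subgroup Γ),
        Nat.Coprime (Nat.card (Γ ⧸ H)) p → (lift' p D ⊔ φ H) ⊓ pPart Γ p = lift' p D := by
      intro D H hH
      rw [sup_inf_assoc_of_le _ (lift'_le p D)]
      have : φ H ⊓ pPart Γ p = ⊥ := by
        rw [eq_bot_iff, ← pPart_inf Γ p, inf_comm]
        exact inf_le_inf_left _ (hK p H hH)
      rw [this, sup_bot_eq]
    have a2 : ∀ (D : Subgroup (maxPQuotient Γ p)) (H : Subgroup Γ),
        Nat.Coprime (Nat.card (Γ ⧸ H)) p → (lift' p D ⊔ φ H) ⊓ primeToPart Γ p = φ H := by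
      intro D H hH
      rw [sup_comm, sup_inf_assoc_of_le _ (hK p H hH)]
      have : lift' p D ⊓ primeToPart Γ p = ⊥ := by
        rw [eq_bot_iff, ← pPart_inf Γ p]
        exact inf_le_inf_right _ (lift'_le p D)
      rw [this, sup_bot_eq]
    obtain rfl : I = I' := lift'_inj hp h1
    obtain rfl : D = D' := lift'_inj hp (by rw [← a1 D H hcop, h2, a1 D' H' hcop'])
    obtain rfl : H = H' := hφ (by rw [← a2 D H hcop, h2, a2 D H' hcop'])
    rfl
  · rintro ⟨⟨p, H, I, D⟩, hp, hc, hcop, hI, hID, hq⟩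
    dsimp only at *
    have hIp := isPGroup_of_le_pPart (lift'_le p I)
    have hIb := lift'_ne_bot hp hI
    have hle : lift' p I ≤ lift' p D ⊔ φ H :=
      (inf_le_inf_right _ (Subgroup.comap_mono hID)).trans le_sup_left
    obtain ⟨k, hk0, hk⟩ := card_of_isPGroup hp hIp hIb
    refine ⟨⟨hIb, hle, isElementary_of_isPGroup hp hIp, (cyclic_quot_iff hle).2 ?_⟩, ?_⟩
    · obtain ⟨d, hd, hdD⟩ := lift'_cyclic hp ((cyclic_quot_iff hID).1 hq)
      obtain ⟨e⟩ := hφe H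
      have hcyc : IsCyclic (φ H) := isCyclic_of_surjective _ e.symm.surjective
      obtain ⟨c, hc⟩ := (Subgroup.isCyclic_iff_exists_zpowers_eq_top (φ H)).1 hcyc
      have hcN : c ∈ primeToPart Γ p := hK p H hcop (hc ▸ Subgroup.mem_zpowers c)
      have hcN' : Nat.Coprime (orderOf c) p := hcN
      obtain ⟨m, hm⟩ := hd
      refine ⟨d * c, ?_⟩
      change lift' p D ⊔ φ H = lift' p I ⊔ _
      rw [hdD, ← hc, sup_assoc, zpowers_sup]
      exact (Nat.Coprime.coprime_dvd_right (orderOf_dvd_of_pow_eq_one hm)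
        (hcN'.pow_right m)).symm
    · change IsPrimePow (Nat.card (lift' p I))
      rw [hk]
      exact hp.isPrimePow.pow hk0

/-- If the finite abelian group Γ is neither cyclic nor of prime-power
order, then #S′ > #T, where S′ = {(I,D) ∈ S : D non-cyclic or #I a prime power}. -/
theorem stmt12 (Γ : Type) [CommGroup Γ] [Fintype Γ]
    (hnc : ¬ IsCyclic Γ) (hnpp : ¬ IsPrimePow (Nat.card Γ)) :
    Nat.card {x // x ∈ SPairs Γ ∧ (¬ IsCyclic x.2 ∨ IsPrimePow (Nat.card x.1))} >
      Nat.card {x // x ∈ TSet Γ} := by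
  obtain ⟨F, hF, hF2⟩ := exists_inj Γ
  obtain ⟨I, hI, hIe, hIc, hIp⟩ := exists_extra Γ hnc hnpp
  have hfin : Finite {x // x ∈ TSet Γ} := Finite.of_injective F hF
  have hS : (I, I) ∈ SPairs Γ :=
    ⟨hI, le_rfl, hIe, (cyclic_quot_iff le_rfl).2 ⟨1, by simp⟩⟩
  let G : Option {x // x ∈ TSet Γ} →
      {x // x ∈ SPairs Γ ∧ (¬ IsCyclic x.2 ∨ IsPrimePow (Nat.card x.1))} := fun o =>
    match o with
    | none => ⟨(I, I), hS, Or.inl hIc⟩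
    | some x => ⟨F x, (hF2 x).1, Or.inr (hF2 x).2⟩
  have hG : Function.Injective G := by
    rintro (_ | x) (_ | y) h
    · rfl
    · have h' : (I, I) = F y := congrArg Subtype.val h
      exact absurd (h' ▸ (hF2 y).2 : IsPrimePow (Nat.card (I, I).1)) hIp
    · have h' : F x = (I, I) := congrArg Subtype.val h
      exact absurd (h' ▸ (hF2 x).2 : IsPrimePow (Nat.card (I, I).1)) hIp
    · exact congrArg some (hF (congrArg Subtype.val h))
  have := Nat.card_le_card_of_injective G hG
  rw [Finite.card_option] at this
  omega
end

section
/- Let Γ be a finite abelian group, S the set of pairs (I,D) with I ⊆ D ⊆ Γ, I nontrivial elementary, D/I cyclic, and T as above. Let S″ = {(I,D) ∈ S : #I is a prime power}. Then #S″ = #T, where T is the set of tuples (p, H, I*, D*) with p prime, H ⊆ Γ with Γ/H cyclic of order prime to p, and I* ⊆ D* ⊆ Γ_p with I* nontrivial, D*/I* cyclic. -/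
theorem exists_dual_equiv (Γ : Type) [CommGroup Γ] [Fintype Γ] :
    ∃ Φ : Subgroup Γ ≃ Subgroup Γ, ∀ H : Subgroup Γ, Nonempty ((Γ ⧸ H) ≃* Φ H) := by
  obtain ⟨e⟩ := CommGroup.monoidHom_mulEquiv_of_hasEnoughRootsOfUnity Γ ℂ
  refine ⟨((CommGroup.subgroupOrderIsoSubgroupMonoidHom Γ ℂ).toEquiv.trans
    OrderDual.ofDual).trans e.mapSubgroup.toEquiv, fun H => ?_⟩
  obtain ⟨e1⟩ := CommGroup.monoidHom_mulEquiv_of_hasEnoughRootsOfUnity (Γ ⧸ H) ℂ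
  exact ⟨e1.symm.trans ((MonoidHom.domRestrictHomKerEquiv ℂˣ H).symm.trans
    (e.subgroupMap (MonoidHom.domRestrictHom H ℂˣ).ker))⟩

theorem mem_of_pows {G : Type} [CommGroup G] {q m : ℕ} (h : Nat.Coprime q m)
    (D : Subgroup G) {x : G} (h1 : x ^ q ∈ D) (h2 : x ^ m ∈ D) : x ∈ D := by
  have hb := Nat.gcd_eq_gcd_ab q m
  rw [h.gcd_eq_one] at hb
  have : x = (x ^ q) ^ (Nat.gcdA q m) * (x ^ m) ^ (Nat.gcdB q m) := by
    rw [← zpow_natCast, ← zpow_natCast, ← zpow_mul, ← zpow_mul, ← zpow_add, ← hb]; simp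
  rw [this]
  exact D.mul_mem (D.zpow_mem h1 _) (D.zpow_mem h2 _)

theorem eq_one_of_pows {G : Type} [CommGroup G] {q m : ℕ} (h : Nat.Coprime q m)
    {x : G} (h1 : x ^ q = 1) (h2 : x ^ m = 1) : x = 1 := by
  have := mem_of_pows h (⊥ : Subgroup G) (x := x) (by simpa using h1) (by simpa using h2)
  simpa using this

section split

variable {G : Type} [CommGroup G] {q m : ℕ} {K : Subgroup G}

theorem mem_map_iff' (D : Subgroup G) (x : G) :
    (QuotientGroup.mk' K x ∈ D.map (QuotientGroup.mk' K)) ↔ ∃ d ∈ D, ∃ k ∈ K, x = d * k := by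
  constructor
  · rintro ⟨d, hd, h⟩
    refine ⟨d, hd, d⁻¹ * x, ?_, by simp⟩
    exact QuotientGroup.eq.1 h
  · rintro ⟨d, hd, k, hk, rfl⟩
    refine ⟨d, hd, ?_⟩
    simpa [QuotientGroup.eq] using hk

theorem pow_mem_of_mem_map (hK : ∀ x, x ∈ K ↔ x ^ m = 1) {D : Subgroup G} {x : G}
    (h : QuotientGroup.mk' K x ∈ D.map (QuotientGroup.mk' K)) : x ^ m ∈ D := by
  obtain ⟨d, hd, k, hk, rfl⟩ := (mem_map_iff' D x).1 h
  rw [mul_pow, (hK k).1 hk, mul_one]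
  exact D.pow_mem hd _

theorem cyc_iff [Finite G] (h : Nat.Coprime q m) (hK : ∀ x, x ∈ K ↔ x ^ m = 1)
    (hqm : ∀ x : G, (x ^ q) ^ m = 1) {I D : Subgroup G} (hID : I ≤ D)
    (hI : ∀ x ∈ I, x ^ q = 1) :
    IsCyclic (D ⧸ I.subgroupOf D) ↔ IsCyclic (D ⊓ K : Subgroup G) ∧
      IsCyclic (D.map (QuotientGroup.mk' K) ⧸
        (I.map (QuotientGroup.mk' K)).subgroupOf (D.map (QuotientGroup.mk' K))) := by
  let f : D →* (D.map (QuotientGroup.mk' K) ⧸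
        (I.map (QuotientGroup.mk' K)).subgroupOf (D.map (QuotientGroup.mk' K))) :=
    (QuotientGroup.mk' _).comp ((QuotientGroup.mk' K).subgroupMap D)
  have hf : Function.Surjective f :=
    (QuotientGroup.mk'_surjective _).comp ((QuotientGroup.mk' K).subgroupMap_surjective D)
  have hf1 : ∀ x : D, f x = 1 ↔
      QuotientGroup.mk' K (x : G) ∈ I.map (QuotientGroup.mk' K) := by
    intro x
    change ((((QuotientGroup.mk' K).subgroupMap D) x : D.map (QuotientGroup.mk' K)) :
      (D.map (QuotientGroup.mk' K) ⧸
        (I.map (QuotientGroup.mk' K)).subgroupOf (D.map (QuotientGroup.mk' K)))) = 1 ↔ _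
    rw [QuotientGroup.eq_one_iff, Subgroup.mem_subgroupOf]
    rfl
  have hfI : ∀ x ∈ I.subgroupOf D, f x = 1 := by
    intro x hx
    rw [hf1]
    exact Subgroup.mem_map_of_mem _ hx
  constructor
  · intro hc
    constructor
    · refine isCyclic_of_injective ((QuotientGroup.mk' (I.subgroupOf D)).comp
        (Subgroup.inclusion (inf_le_left : D ⊓ K ≤ D))) ?_
      rw [injective_iff_map_eq_one]
      rintro ⟨x, hxD, hxK⟩ hx
      have hx' : x ∈ I := by
        have := (QuotientGroup.eq_one_iff _).1 hx
        exact this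
      have : x = 1 := eq_one_of_pows h (hI x hx') ((hK x).1 hxK)
      subst this
      rfl
    · exact isCyclic_of_surjective (QuotientGroup.lift (I.subgroupOf D) f hfI)
        (QuotientGroup.lift_surjective_of_surjective _ _ hf _)
  · rintro ⟨h1, h2⟩
    let g : D →* (D ⊓ K : Subgroup G) :=
      { toFun := fun x => ⟨(x : G) ^ q, D.pow_mem x.2 _, (hK _).2 (hqm _)⟩
        map_one' := by ext; simp
        map_mul' := by intro a b; ext; simp [mul_pow] }
    have hcop : IsCyclic ((D ⊓ K : Subgroup G) × (D.map (QuotientGroup.mk' K) ⧸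
        (I.map (QuotientGroup.mk' K)).subgroupOf (D.map (QuotientGroup.mk' K)))) := by
      rw [Group.isCyclic_prod_iff]
      refine ⟨h1, h2, ?_⟩
      rw [← IsCyclic.exponent_eq_card, ← IsCyclic.exponent_eq_card]
      refine Nat.Coprime.of_dvd ?_ ?_ h.symm
      · apply Monoid.exponent_dvd_of_forall_pow_eq_one
        rintro ⟨x, hx⟩
        ext
        exact (hK x).1 hx.2
      · apply Monoid.exponent_dvd_of_forall_pow_eq_one
        intro y
        obtain ⟨x, rfl⟩ := hf y
        rw [← map_pow, hf1]
        refine (mem_map_iff' I _).2 ⟨1, I.one_mem, (x : G) ^ q, (hK _).2 (hqm _), by simp⟩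
    refine isCyclic_of_injective (QuotientGroup.lift (I.subgroupOf D) (g.prod f) ?_) ?_
    · intro x hx
      refine Prod.ext ?_ (hfI x hx)
      ext
      exact hI x hx
    · rw [injective_iff_map_eq_one]
      intro y
      obtain ⟨x, rfl⟩ := QuotientGroup.mk'_surjective _ y
      intro hx
      have hx1 : g x = 1 := congrArg Prod.fst hx
      have hx2 : f x = 1 := congrArg Prod.snd hx
      have hx1' : (x : G) ^ q = 1 := congrArg Subtype.val hx1
      rw [hf1] at hx2
      refine (QuotientGroup.eq_one_iff _).2 ?_
      refine mem_of_pows h I (x := (x : G)) ?_ (pow_mem_of_mem_map hK hx2)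
      rw [hx1']; exact I.one_mem

/-- The candidate for `I`. -/
def mkI (K : Subgroup G) (q : ℕ) (J : Subgroup (G ⧸ K)) : Subgroup G :=
  J.comap (QuotientGroup.mk' K) ⊓ (powMonoidHom q : G →* G).ker

theorem mem_mkI {J : Subgroup (G ⧸ K)} {x : G} :
    x ∈ mkI K q J ↔ QuotientGroup.mk' K x ∈ J ∧ x ^ q = 1 := Iff.rfl

theorem map_mkI (h : Nat.Coprime q m) (hK : ∀ x, x ∈ K ↔ x ^ m = 1)
    (hqm : ∀ x : G, (x ^ q) ^ m = 1) (J : Subgroup (G ⧸ K)) :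
    (mkI K q J).map (QuotientGroup.mk' K) = J := by
  apply le_antisymm
  · rintro _ ⟨x, hx, rfl⟩
    exact hx.1
  · intro y hy
    obtain ⟨x, rfl⟩ := QuotientGroup.mk'_surjective _ y
    refine mem_of_pows h _ ?_ ?_
    · rw [← map_pow]
      exact (mem_map_iff' _ _).2 ⟨1, one_mem _, x ^ q, (hK _).2 (hqm _), by simp⟩
    · rw [← map_pow]
      refine Subgroup.mem_map_of_mem _ (mem_mkI.2 ⟨?_, ?_⟩)
      · rw [map_pow]; exact J.pow_mem hy _
      · rw [← pow_mul, mul_comm, pow_mul]; exact hqm x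

theorem sup_mkI_inf (h : Nat.Coprime q m) (hK : ∀ x, x ∈ K ↔ x ^ m = 1)
    {C : Subgroup G} (hC : C ≤ K) (J : Subgroup (G ⧸ K)) : (C ⊔ mkI K q J) ⊓ K = C := by
  apply le_antisymm
  · rintro x ⟨hx, hxK⟩
    obtain ⟨c, hc, y, hy, rfl⟩ := Subgroup.mem_sup.1 hx
    have hyK : y ∈ K := (Subgroup.mul_mem_cancel_left K (hC hc)).1 hxK
    have : y = 1 := eq_one_of_pows h hy.2 ((hK y).1 hyK)
    subst this
    simpa using hc
  · exact le_inf le_sup_left hC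

theorem map_sup_mkI (h : Nat.Coprime q m) (hK : ∀ x, x ∈ K ↔ x ^ m = 1)
    (hqm : ∀ x : G, (x ^ q) ^ m = 1) {C : Subgroup G} (hC : C ≤ K) (J : Subgroup (G ⧸ K)) :
    (C ⊔ mkI K q J).map (QuotientGroup.mk' K) = J := by
  rw [Subgroup.map_sup, map_mkI h hK hqm, sup_eq_right]
  rintro _ ⟨x, hx, rfl⟩
  have : QuotientGroup.mk' K x = 1 := (QuotientGroup.eq_one_iff _).2 (hC hx)
  rw [this]; exact J.one_mem

theorem mkI_map (h : Nat.Coprime q m) (hK : ∀ x, x ∈ K ↔ x ^ m = 1)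
    {I : Subgroup G} (hI : ∀ x ∈ I, x ^ q = 1) :
    mkI K q (I.map (QuotientGroup.mk' K)) = I := by
  apply le_antisymm
  · rintro x hx
    obtain ⟨h1, h2⟩ := mem_mkI.1 hx
    refine mem_of_pows h I ?_ (pow_mem_of_mem_map hK h1)
    rw [h2]; exact I.one_mem
  · intro x hx
    exact mem_mkI.2 ⟨Subgroup.mem_map_of_mem _ hx, hI x hx⟩

theorem sup_mkI_map (h : Nat.Coprime q m) (hK : ∀ x, x ∈ K ↔ x ^ m = 1)
    (hqm : ∀ x : G, (x ^ q) ^ m = 1) (D : Subgroup G) :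
    (D ⊓ K) ⊔ mkI K q (D.map (QuotientGroup.mk' K)) = D := by
  apply le_antisymm
  · refine sup_le inf_le_left ?_
    rintro x hx
    obtain ⟨h1, h2⟩ := mem_mkI.1 hx
    refine mem_of_pows h D ?_ (pow_mem_of_mem_map hK h1)
    rw [h2]; exact D.one_mem
  · intro x hx
    refine mem_of_pows h _ ?_ ?_
    · exact (le_sup_left : D ⊓ K ≤ _) ⟨D.pow_mem hx _, (hK _).2 (hqm _)⟩
    · refine (le_sup_right : mkI K q (D.map (QuotientGroup.mk' K)) ≤ _) (mem_mkI.2 ⟨?_, ?_⟩)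
      · exact Subgroup.mem_map_of_mem _ (D.pow_mem hx _)
      · rw [← pow_mul, mul_comm, pow_mul]; exact hqm x

end split

theorem isCyclic_transport {G : Type} [CommGroup G] {A A' B B' : Subgroup G} (hA : A = A')
    (hB : B = B') (h : IsCyclic (B ⧸ A.subgroupOf B)) : IsCyclic (B' ⧸ A'.subgroupOf B') := by
  subst hA hB
  exact h

section final

variable (Γ : Type) [CommGroup Γ] [Fintype Γ]

/-- the order of the p-part -/
noncomputable def qq (p : ℕ) : ℕ := p ^ (Nat.card Γ).factorization p
/-- the order of the prime-to-p part -/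
noncomputable def mm (p : ℕ) : ℕ := Nat.card Γ / p ^ (Nat.card Γ).factorization p

variable {p : ℕ} (hp : p.Prime)
include hp

theorem p_cop_mm : Nat.Coprime p (mm Γ p) := Nat.coprime_ordCompl hp Nat.card_pos.ne'

theorem qq_cop_mm : Nat.Coprime (qq Γ p) (mm Γ p) := (p_cop_mm Γ hp).pow_left _

omit hp in
theorem qq_mul_mm : ∀ x : Γ, (x ^ qq Γ p) ^ mm Γ p = 1 := by
  intro x
  rw [← pow_mul, qq, mm, Nat.ordProj_mul_ordCompl_eq_self]
  exact pow_card_eq_one'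

theorem mem_ptp (x : Γ) : x ∈ primeToPart Γ p ↔ x ^ mm Γ p = 1 := by
  change Nat.Coprime (orderOf x) p ↔ _
  rw [← orderOf_dvd_iff_pow_eq_one]
  constructor
  · intro h
    have h1 : orderOf x ∣ qq Γ p * mm Γ p := by
      rw [orderOf_dvd_iff_pow_eq_one, pow_mul]; exact qq_mul_mm Γ x
    exact (Nat.Coprime.pow_right _ h).dvd_of_dvd_mul_left h1
  · intro h
    exact Nat.Coprime.coprime_dvd_left h (p_cop_mm Γ hp).symm

theorem pow_qq_of_pow {x : Γ} {k : ℕ} (h : x ^ p ^ k = 1) : x ^ qq Γ p = 1 := by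
  refine eq_one_of_pows ((p_cop_mm Γ hp).pow_left k) ?_ (qq_mul_mm Γ x)
  rw [← pow_mul, mul_comm, pow_mul, h, one_pow]

theorem le_ptp_of_coprime {C : Subgroup Γ} (h : Nat.Coprime (Nat.card C) p) :
    C ≤ primeToPart Γ p := by
  intro x hx
  exact Nat.Coprime.coprime_dvd_left (Subgroup.orderOf_dvd_natCard C hx) h

theorem coprime_of_le_ptp {C : Subgroup Γ} (hc : IsCyclic C) (h : C ≤ primeToPart Γ p) :
    Nat.Coprime (Nat.card C) p := by
  rw [← IsCyclic.exponent_eq_card]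
  refine Nat.Coprime.coprime_dvd_left ?_ (p_cop_mm Γ hp).symm
  apply Monoid.exponent_dvd_of_forall_pow_eq_one
  rintro ⟨x, hx⟩
  ext
  exact (mem_ptp Γ hp x).1 (h hx)

theorem isPGroup_of_pow {I : Subgroup Γ} (h : ∀ x ∈ I, x ^ qq Γ p = 1) : IsPGroup p I := by
  rintro ⟨x, hx⟩
  exact ⟨_, Subtype.ext (h x hx)⟩

end final

theorem exists_prime_of_isPrimePow (Γ : Type) [CommGroup Γ] [Fintype Γ] {I : Subgroup Γ}
    (h : IsPrimePow (Nat.card I)) : ∃ p : ℕ, p.Prime ∧ ∀ x ∈ I, x ^ qq Γ p = 1 := by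
  rw [isPrimePow_nat_iff] at h
  obtain ⟨p, k, hp, hk, hcard⟩ := h
  refine ⟨p, hp, fun x hx => pow_qq_of_pow Γ hp (k := k) ?_⟩
  rw [hcard, ← orderOf_dvd_iff_pow_eq_one]
  exact Subgroup.orderOf_dvd_natCard I hx

theorem stmt13 (Γ : Type) [CommGroup Γ] [Fintype Γ] :
    Nat.card {x // x ∈ SPairs Γ ∧ IsPrimePow (Nat.card x.1)} =
      Nat.card {x // x ∈ TSet Γ} := by
  obtain ⟨Φ, hΦ⟩ := exists_dual_equiv Γ
  have hΦc : ∀ H, IsCyclic (Γ ⧸ H) ↔ IsCyclic (Φ H) := fun H => (hΦ H).some.isCyclic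
  have hΦn : ∀ H, Nat.card (Γ ⧸ H) = Nat.card (Φ H) := fun H =>
    Nat.card_congr (hΦ H).some.toEquiv
  have hle : ∀ x ∈ TSet Γ, Φ x.2.1 ≤ primeToPart Γ x.1 := by
    rintro ⟨p, H, I, D⟩ ⟨hp, -, h, -⟩
    dsimp only at *
    rw [hΦn] at h
    exact le_ptp_of_coprime Γ hp h
  let F : {x // x ∈ TSet Γ} → Subgroup Γ × Subgroup Γ := fun x =>
    (mkI (primeToPart Γ x.1.1) (qq Γ x.1.1) x.1.2.2.1,
      Φ x.1.2.1 ⊔ mkI (primeToPart Γ x.1.1) (qq Γ x.1.1) x.1.2.2.2)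
  have hF : ∀ x, F x ∈ SPairs Γ ∧ IsPrimePow (Nat.card (F x).1) := ?hF
  have hinj : Function.Injective F := ?hinj
  have hsurj : ∀ y, y ∈ SPairs Γ ∧ IsPrimePow (Nat.card y.1) → ∃ x, F x = y := ?hsurj
  · symm
    refine Nat.card_eq_of_bijective (fun x => ⟨F x, hF x⟩) ⟨fun x y h => ?_, fun y => ?_⟩
    · exact hinj (congrArg Subtype.val h)
    · obtain ⟨x, hx⟩ := hsurj y.1 y.2
      exact ⟨x, Subtype.ext hx⟩
  case hF =>
    intro x
    obtain ⟨⟨p, H, I, D⟩, hx⟩ := x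
    have hC := hle _ hx
    obtain ⟨hp, hc, hn, hI, hID, hcyc⟩ := hx
    dsimp only [F] at *
    have h1 := qq_cop_mm Γ hp
    have h2 := mem_ptp Γ hp
    have h3 := qq_mul_mm Γ (p := p)
    have hIq : ∀ x ∈ mkI (primeToPart Γ p) (qq Γ p) I, x ^ qq Γ p = 1 := fun x hx => hx.2
    have hle' : mkI (primeToPart Γ p) (qq Γ p) I ≤ Φ H ⊔ mkI (primeToPart Γ p) (qq Γ p) D := by
      refine le_trans ?_ le_sup_right
      intro x hx
      exact ⟨hID hx.1, hx.2⟩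
    have hne : mkI (primeToPart Γ p) (qq Γ p) I ≠ ⊥ := by
      intro hb
      apply hI
      rw [← map_mkI h1 h2 h3 I, hb, Subgroup.map_bot]
    have hP := isPGroup_of_pow Γ hp hIq
    refine ⟨⟨hne, hle', ⟨p, hp, ⊤, ⊥, hP.to_subgroup _, inferInstance, by simp, by simp⟩, ?_⟩, ?_⟩
    · rw [cyc_iff h1 h2 h3 hle' hIq]
      refine ⟨?_, isCyclic_transport (map_mkI h1 h2 h3 I).symm
        (map_sup_mkI h1 h2 h3 hC D).symm hcyc⟩
      rw [sup_mkI_inf h1 h2 hC]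
      exact (hΦc H).1 hc
    · have := Fact.mk hp
      obtain ⟨n, hn⟩ := IsPGroup.iff_card.1 hP
      rw [hn]
      refine hp.isPrimePow.pow ?_
      rintro rfl
      apply hne
      rw [Subgroup.eq_bot_iff_card, hn, pow_zero]
  case hinj =>
    rintro ⟨⟨p, H, I, D⟩, hx⟩ ⟨⟨p', H', I', D'⟩, hx'⟩ heq
    have hC := hle _ hx
    have hC' := hle _ hx'
    obtain ⟨hp, hc, hn, hI, hID, hcyc⟩ := hx
    obtain ⟨hp', hc', hn', hI', hID', hcyc'⟩ := hx'
    have heqI := congrArg Prod.fst heq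
    have heqD := congrArg Prod.snd heq
    clear heq
    dsimp only [F] at *
    have h1 := qq_cop_mm Γ hp
    have h2 := mem_ptp Γ hp
    have h3 := qq_mul_mm Γ (p := p)
    have hpp : p = p' := by
      by_contra hpp
      apply hI
      rw [← map_mkI h1 h2 h3 I, Subgroup.map_eq_bot_iff]
      intro x hx
      have hx' := hx
      rw [heqI] at hx'
      have : x = 1 := eq_one_of_pows
        (Nat.Coprime.pow _ _ ((Nat.coprime_primes hp hp').2 hpp)) hx.2 hx'.2
      subst this
      exact one_mem _
    subst hpp
    have eI : I = I' := by
      rw [← map_mkI h1 h2 h3 I, heqI, map_mkI h1 h2 h3]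
    have eD : D = D' := by
      rw [← map_sup_mkI h1 h2 h3 hC D, heqD, map_sup_mkI h1 h2 h3 hC']
    have eH : H = H' := by
      apply Φ.injective
      rw [← sup_mkI_inf h1 h2 hC D, heqD, sup_mkI_inf h1 h2 hC']
    subst eI eD eH
    rfl
  case hsurj =>
    rintro ⟨I, D⟩ ⟨⟨hI, hID, -, hcyc⟩, hpp⟩
    have hI0 : I ≠ ⊥ := hI
    have hID0 : I ≤ D := hID
    have hcyc0 : IsCyclic (D ⧸ I.subgroupOf D) := hcyc
    have hpp0 : IsPrimePow (Nat.card I) := hpp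
    obtain ⟨p, hp, hIq⟩ := exists_prime_of_isPrimePow Γ hpp0
    have h1 := qq_cop_mm Γ hp
    have h2 := mem_ptp Γ hp
    have h3 := qq_mul_mm Γ (p := p)
    obtain ⟨hc1, hc2⟩ := (cyc_iff h1 h2 h3 hID0 hIq).1 hcyc0
    have hH : IsCyclic (Γ ⧸ Φ.symm (D ⊓ primeToPart Γ p)) := by
      rw [hΦc, Equiv.apply_symm_apply]; exact hc1
    have hHn : Nat.Coprime (Nat.card (Γ ⧸ Φ.symm (D ⊓ primeToPart Γ p))) p := by
      rw [hΦn, Equiv.apply_symm_apply]; exact coprime_of_le_ptp Γ hp hc1 inf_le_right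
    have hne : I.map (QuotientGroup.mk' (primeToPart Γ p)) ≠ ⊥ := by
      intro hb
      apply hI0
      rw [← mkI_map h1 h2 hIq, hb, eq_bot_iff]
      intro x hx
      have hxK : x ∈ primeToPart Γ p := (QuotientGroup.eq_one_iff _).1 (by simpa using hx.1)
      simpa using eq_one_of_pows h1 hx.2 ((h2 x).1 hxK)
    have hmono : I.map (QuotientGroup.mk' (primeToPart Γ p)) ≤
        D.map (QuotientGroup.mk' (primeToPart Γ p)) := Subgroup.map_mono hID0
    have hT : (⟨p, Φ.symm (D ⊓ primeToPart Γ p), I.map (QuotientGroup.mk' (primeToPart Γ p)),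
        D.map (QuotientGroup.mk' (primeToPart Γ p))⟩ : Σ q : ℕ, Subgroup Γ ×
          Subgroup (maxPQuotient Γ q) × Subgroup (maxPQuotient Γ q)) ∈ TSet Γ :=
      And.intro hp (And.intro hH (And.intro hHn (And.intro hne (And.intro hmono hc2))))
    refine ⟨⟨_, hT⟩, ?_⟩
    dsimp only [F]
    rw [Equiv.apply_symm_apply, mkI_map h1 h2 hIq, sup_mkI_map h1 h2 h3]
end
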